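/- arXiv:1706.06911 — 2 statements merged into one kernel-verified Lean document; each statement's English description precedes it below -/
import Mathlib

section
/- Let ε ≥ 1. If T ⊆ {1,…,r} satisfies condition (a) and Σ_{i∈T} w(i) ≤ ε · min{ Σ_{i∈T'} w(i) : T' ⊆ {1,…,r} satisfies condition (a) }, then Σ_{i∈T} w(i) ≤ ε · min{ Σ_{i∈S'} w(i) : S' ⊆ {1,…,r}, ⋃_{i∈S'} S_i = {1,…,N} }; that is, an ε-optimal feedback selection yields an ε-optimal weighted set cover. -/
/-- Vertices of the reduction digraph: states `x_1,…,x_{N+1}`, the single input `u_1`,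
and outputs `y_1,…,y_r`. -/
abbrev RVert (N r : ℕ) : Type := Fin (N + 1) ⊕ Unit ⊕ Fin r

/-- State vertex. -/
def rX {N r : ℕ} (j : Fin (N + 1)) : RVert N r := Sum.inl j

/-- The input vertex `u_1`. -/
def rU {N r : ℕ} : RVert N r := Sum.inr (Sum.inl ())

/-- Output vertex `y_i`. -/
def rY {N r : ℕ} (i : Fin r) : RVert N r := Sum.inr (Sum.inr i)

/-- Edge relation of the reduction digraph `G(T)`: self-loops on every state,
`x_{N+1} → x_j` for `j ≤ N`, `u_1 → x_{N+1}`, `x_j → y_i` whenever `j ∈ S i`,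
and `y_i → u_1` whenever `i ∈ T`. -/
def redEdge {N r : ℕ} (S : Fin r → Finset (Fin N)) (T : Finset (Fin r)) :
    RVert N r → RVert N r → Prop
  | Sum.inl a, Sum.inl c => a = c ∨ (a = Fin.last N ∧ c ≠ Fin.last N)
  | Sum.inr (Sum.inl _), Sum.inl c => c = Fin.last N
  | Sum.inl a, Sum.inr (Sum.inr i) => ∃ j : Fin N, Fin.castSucc j = a ∧ j ∈ S i
  | Sum.inr (Sum.inr i), Sum.inr (Sum.inl _) => i ∈ T
  | _, _ => False

/-- Two vertices lie in the same strongly connected component: each is reachable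
from the other (reachability is the reflexive–transitive closure of the edges). -/
def sameSCC {α : Type*} (E : α → α → Prop) (a b : α) : Prop :=
  Relation.ReflTransGen E a b ∧ Relation.ReflTransGen E b a

/-- `T` satisfies condition (a): every state vertex `x_j` lies in the same SCC of
`G(T)` as both `y_i` and `u_1` for some `i ∈ T`. -/
def redCondA {N r : ℕ} (S : Fin r → Finset (Fin N)) (T : Finset (Fin r)) : Prop :=
  ∀ a : Fin (N + 1), ∃ i ∈ T,
    sameSCC (redEdge S T) (rX a) (rY i) ∧ sameSCC (redEdge S T) (rX a) rU

/-! A state `x_j` with `j ≤ N` leaves itself only through outputs `y_i` with `j ∈ S i`, and such an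
output has an outgoing edge (to `u_1`) only if `i ∈ T`. Hence `x_j` reaches `u_1` exactly when `T`
covers `j`. Conversely `u_1` reaches every state, so a walk `x_j → y_i → u_1` always closes up, and
for `N ≥ 1` the remaining state `x_{N+1}` is served through `x_1`. So condition (a) says precisely
that `T` is a set cover, and the two problems minimise the same weight over the same family. -/

/-- The selection `T` of indices is a set cover: the sets `S i` with `i ∈ T` cover the whole type
`α`, which plays the role of the universe. -/
def IsSetCover {ι α : Type*} (S : ι → Finset α) (T : Finset ι) : Prop :=
  ∀ x : α, ∃ i ∈ T, x ∈ S i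

section Reduction

open Relation

variable {N r : ℕ} {S : Fin r → Finset (Fin N)} {T : Finset (Fin r)}

lemma redEdge_rX_castSucc_iff {j : Fin N} {v : RVert N r} :
    redEdge S T (rX j.castSucc) v ↔ v = rX j.castSucc ∨ ∃ i, j ∈ S i ∧ v = rY i := by
  rcases v with a | _ | i <;> simp [redEdge, rX, rY, Fin.castSucc_ne_last, eq_comm]

lemma redEdge_rY_iff {i : Fin r} {v : RVert N r} :
    redEdge S T (rY i) v ↔ i ∈ T ∧ v = rU := by
  rcases v with a | _ | k <;> simp [redEdge, rY, rU]

lemma redEdge_rU_rX_last : redEdge S T rU (rX (Fin.last N)) := rfl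

lemma redEdge_rX_last_rX_castSucc (j : Fin N) :
    redEdge S T (rX (Fin.last N)) (rX j.castSucc) :=
  Or.inr ⟨rfl, j.castSucc_ne_last⟩

lemma mem_of_reflTransGen_rY_rU {i : Fin r} (h : ReflTransGen (redEdge S T) (rY i) rU) :
    i ∈ T := by
  obtain h_eq | ⟨v, h_edge, -⟩ := h.cases_head
  · cases h_eq
  · exact (redEdge_rY_iff.mp h_edge).1

lemma exists_mem_of_reflTransGen_rX_castSucc_rU {j : Fin N}
    (h : ReflTransGen (redEdge S T) (rX j.castSucc) rU) : ∃ i ∈ T, j ∈ S i := by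
  generalize hv : (rX j.castSucc : RVert N r) = v at h
  induction h using ReflTransGen.head_induction_on with
  | refl => cases hv
  | head h_edge h_walk ih =>
    subst hv
    obtain rfl | ⟨i, hj, rfl⟩ := redEdge_rX_castSucc_iff.mp h_edge
    · exact ih rfl
    · exact ⟨i, mem_of_reflTransGen_rY_rU h_walk, hj⟩

lemma reflTransGen_rU_rX (a : Fin (N + 1)) : ReflTransGen (redEdge S T) rU (rX a) := by
  have to_last : ReflTransGen (redEdge S T) rU (rX (Fin.last N)) := .single redEdge_rU_rX_last
  cases a using Fin.lastCases with
  | last => exact to_last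
  | cast j => exact to_last.tail (redEdge_rX_last_rX_castSucc j)

lemma sameSCC_rY_and_rU_of_reflTransGen {a : Fin (N + 1)} {i : Fin r} (hi : i ∈ T)
    (h : ReflTransGen (redEdge S T) (rX a) (rY i)) :
    sameSCC (redEdge S T) (rX a) (rY i) ∧ sameSCC (redEdge S T) (rX a) rU := by
  have output_to_input : redEdge S T (rY i) rU := redEdge_rY_iff.mpr ⟨hi, rfl⟩
  have input_to_state : ReflTransGen (redEdge S T) rU (rX a) := reflTransGen_rU_rX a
  exact ⟨⟨h, input_to_state.head output_to_input⟩, h.tail output_to_input, input_to_state⟩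

lemma redCondA.isSetCover (h : redCondA S T) : IsSetCover S T := fun j =>
  have ⟨_, _, _, h_input⟩ := h j.castSucc
  exists_mem_of_reflTransGen_rX_castSucc_rU h_input.1

lemma IsSetCover.redCondA (hN : 1 ≤ N) (h : IsSetCover S T) : redCondA S T := by
  have state_to_output {j : Fin N} {i : Fin r} (hj : j ∈ S i) :
      redEdge S T (rX j.castSucc) (rY i) :=
    redEdge_rX_castSucc_iff.mpr (Or.inr ⟨i, hj, rfl⟩)
  intro a
  cases a using Fin.lastCases with
  | last =>
    obtain ⟨i, hi, hj⟩ := h ⟨0, hN⟩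
    exact ⟨i, hi, sameSCC_rY_and_rU_of_reflTransGen hi
      (.head (redEdge_rX_last_rX_castSucc _) (.single (state_to_output hj)))⟩
  | cast j =>
    obtain ⟨i, hi, hj⟩ := h j
    exact ⟨i, hi, sameSCC_rY_and_rU_of_reflTransGen hi (.single (state_to_output hj))⟩

lemma redCondA_iff_isSetCover (hN : 1 ≤ N) : redCondA S T ↔ IsSetCover S T :=
  ⟨redCondA.isSetCover, IsSetCover.redCondA hN⟩

end Reduction

theorem reduction_eps_optimal_general {M : Type*} [Semiring M] [ConditionallyCompleteLinearOrder M]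
    {N r : ℕ} (hN : 1 ≤ N) (S : Fin r → Finset (Fin N)) (w : Fin r → M) (ε : M)
    (T : Finset (Fin r)) (hT : redCondA S T)
    (happrox : ∑ i ∈ T, w i ≤
      ε * sInf {c : M | ∃ T' : Finset (Fin r), redCondA S T' ∧ c = ∑ i ∈ T', w i}) :
    IsSetCover S T ∧ ∑ i ∈ T, w i ≤
      ε * sInf {c : M | ∃ T' : Finset (Fin r), IsSetCover S T' ∧ c = ∑ i ∈ T', w i} := by
  refine ⟨hT.isSetCover, ?_⟩
  simpa only [redCondA_iff_isSetCover hN] using happrox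

/-- an `ε`-optimal feedback selection (a `T` satisfying condition
(a) of weight at most `ε` times the optimal such weight) is an `ε`-optimal
weighted set cover. -/
theorem reduction_eps_optimal {N r : ℕ} (hN : 1 ≤ N) (hr : 1 ≤ r)
    (S : Fin r → Finset (Fin N)) (hcover : ∀ x : Fin N, ∃ i : Fin r, x ∈ S i)
    (w : Fin r → NNReal) (ε : NNReal) (hε : 1 ≤ ε)
    (T : Finset (Fin r)) (hT : redCondA S T)
    (happrox : ∑ i ∈ T, w i ≤
      ε * sInf {c : NNReal | ∃ T' : Finset (Fin r), redCondA S T' ∧ c = ∑ i ∈ T', w i}) :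
    ∑ i ∈ T, w i ≤
      ε * sInf {c : NNReal | ∃ T' : Finset (Fin r),
        (∀ x : Fin N, ∃ i ∈ T', x ∈ S i) ∧ c = ∑ i ∈ T', w i} :=
  (reduction_eps_optimal_general hN S w ε T hT happrox).2
end

section
/- Suppose the state digraph is strongly connected (and n ≥ 1), there is a permutation σ of the state vertices with a state edge x → σ(x) for every x, and P ∈ ℝ_{≥0}^{m×p}. Then: (1) for any pair (i,j) such that u_i has an input edge to some state vertex and some state vertex has an output edge to y_j, the singleton feedback set K = {(i,j)} satisfies conditions (a) and (b); and (2) the minimum of P(K) over all feedback sets K satisfying conditions (a) and (b) equals the minimum of P_{ij} over all pairs (i,j) such that u_i has an input edge to some state vertex and some state vertex has an output edge to y_j (provided at least one such pair exists). -/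
/-- Vertices of a structured system: states `x_1,…,x_n`, inputs `u_1,…,u_m`,
outputs `y_1,…,y_p`. -/
abbrev SVert (n m p : ℕ) : Type := Fin n ⊕ Fin m ⊕ Fin p

/-- State vertex. -/
def stX {n m p : ℕ} (a : Fin n) : SVert n m p := Sum.inl a

/-- Input vertex. -/
def stU {n m p : ℕ} (i : Fin m) : SVert n m p := Sum.inr (Sum.inl i)

/-- Output vertex. -/
def stY {n m p : ℕ} (j : Fin p) : SVert n m p := Sum.inr (Sum.inr j)

/-- Edge relation of the closed-loop digraph: state edges (given by `A`), input
edges `u_i → x_c` (given by `B`), output edges `x_a → y_j` (given by `Co`), and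
feedback edges `y_j → u_i` for `(i, j) ∈ K`. -/
def closedEdge {n m p : ℕ} (A : Fin n → Fin n → Prop) (B : Fin m → Fin n → Prop)
    (Co : Fin n → Fin p → Prop) (K : Finset (Fin m × Fin p)) :
    SVert n m p → SVert n m p → Prop
  | Sum.inl a, Sum.inl c => A a c
  | Sum.inr (Sum.inl i), Sum.inl c => B i c
  | Sum.inl a, Sum.inr (Sum.inr j) => Co a j
  | Sum.inr (Sum.inr j), Sum.inr (Sum.inl i) => (i, j) ∈ K
  | _, _ => False

/-- Condition (a): every state vertex lies in the same SCC of the closed-loop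
digraph as both endpoints `u_i`, `y_j` of some feedback edge `(i, j) ∈ K`. -/
def condA {n m p : ℕ} (A : Fin n → Fin n → Prop) (B : Fin m → Fin n → Prop)
    (Co : Fin n → Fin p → Prop) (K : Finset (Fin m × Fin p)) : Prop :=
  ∀ a : Fin n, ∃ e ∈ K,
    sameSCC (closedEdge A B Co K) (stX a) (stU e.1) ∧
    sameSCC (closedEdge A B Co K) (stX a) (stY e.2)

/-- Condition (b): a collection of vertex-disjoint directed cycles of the
closed-loop digraph covers all state vertices.  Encoded as: there is a set `S`
of vertices containing all state vertices and a map `f` permuting `S` such that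
`v → f v` is an edge for every `v ∈ S` (the cycles of `f` are the cycle
collection). -/
def condB {n m p : ℕ} (A : Fin n → Fin n → Prop) (B : Fin m → Fin n → Prop)
    (Co : Fin n → Fin p → Prop) (K : Finset (Fin m × Fin p)) : Prop :=
  ∃ (S : Set (SVert n m p)) (f : SVert n m p → SVert n m p),
    Set.BijOn f S S ∧ (∀ a : Fin n, stX a ∈ S) ∧
    ∀ v ∈ S, closedEdge A B Co K v (f v)

/-- Cost of a feedback set under cost matrix `P`. -/
def fcost {m p : ℕ} (P : Fin m → Fin p → NNReal) (K : Finset (Fin m × Fin p)) : NNReal :=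
  ∑ e ∈ K, P e.1 e.2

/-!
The unique feedback edge `y_j → u_i` closes every state path from a successor of `u_i` to a
predecessor of `y_j` into a closed walk, so in an irreducible system one such edge already puts all
states into the component of both its endpoints, while the cycles of `σ` cover the states without
any feedback. Conversely, for `u_i` and `y_j` to share a component with a state, `u_i` needs an
input edge and `y_j` an output edge; so any feedback set satisfying (a) contains an eligible pair,
and by nonnegativity costs at least as much as that pair alone.
-/

open Relation

section ClosedLoop

variable {n m p : ℕ} {A : Fin n → Fin n → Prop} {B : Fin m → Fin n → Prop}
  {Co : Fin n → Fin p → Prop} {K : Finset (Fin m × Fin p)}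

theorem closedEdge_stU_iff {i : Fin m} {v : SVert n m p} :
    closedEdge A B Co K (stU i) v ↔ ∃ s, v = stX s ∧ B i s := by
  rcases v with s | i' | j <;> simp [closedEdge, stU, stX]

theorem closedEdge_stY_iff {v : SVert n m p} {j : Fin p} :
    closedEdge A B Co K v (stY j) ↔ ∃ s, v = stX s ∧ Co s j := by
  rcases v with s | i | j' <;> simp [closedEdge, stX, stY]

theorem reflTransGen_closedEdge_stX {a c : Fin n} (h : ReflTransGen A a c) :
    ReflTransGen (closedEdge A B Co K) (stX a) (stX c) :=
  h.lift stX fun _ _ hac => hac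

theorem exists_input_of_reflTransGen {i : Fin m} {a : Fin n}
    (h : ReflTransGen (closedEdge A B Co K) (stU i) (stX a)) : ∃ s, B i s := by
  obtain heq | ⟨v, hiv, -⟩ := h.cases_head
  · simp [stU, stX] at heq
  · obtain ⟨s, -, hs⟩ := closedEdge_stU_iff.mp hiv
    exact ⟨s, hs⟩

theorem exists_output_of_reflTransGen {a : Fin n} {j : Fin p}
    (h : ReflTransGen (closedEdge A B Co K) (stX a) (stY j)) : ∃ s, Co s j := by
  obtain heq | ⟨v, -, hvj⟩ := h.cases_tail
  · simp [stX, stY] at heq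
  · obtain ⟨s, -, hs⟩ := closedEdge_stY_iff.mp hvj
    exact ⟨s, hs⟩

theorem sameSCC_stU_stY_of_mem {i : Fin m} {j : Fin p} {s a t : Fin n} (hij : (i, j) ∈ K)
    (hs : B i s) (ht : Co t j) (hsa : ReflTransGen A s a) (hat : ReflTransGen A a t) :
    sameSCC (closedEdge A B Co K) (stX a) (stU i) ∧
      sameSCC (closedEdge A B Co K) (stX a) (stY j) := by
  have feedback : closedEdge A B Co K (stY j) (stU i) := hij
  have input_to_state : ReflTransGen (closedEdge A B Co K) (stU i) (stX a) :=
    (reflTransGen_closedEdge_stX hsa).head (closedEdge_stU_iff.mpr ⟨s, rfl, hs⟩)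
  have state_to_output : ReflTransGen (closedEdge A B Co K) (stX a) (stY j) :=
    (reflTransGen_closedEdge_stX hat).tail (closedEdge_stY_iff.mpr ⟨t, rfl, ht⟩)
  exact ⟨⟨state_to_output.tail feedback, input_to_state⟩,
    ⟨state_to_output, input_to_state.head feedback⟩⟩

theorem condA_of_mem (hirr : ∀ a c : Fin n, ReflTransGen A a c) {i : Fin m} {j : Fin p}
    (hij : (i, j) ∈ K) (hi : ∃ s, B i s) (hj : ∃ s, Co s j) : condA A B Co K := by
  obtain ⟨s, hs⟩ := hi
  obtain ⟨t, ht⟩ := hj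
  exact fun a => ⟨(i, j), hij, sameSCC_stU_stY_of_mem hij hs ht (hirr s a) (hirr a t)⟩

theorem condB_of_perm (σ : Equiv.Perm (Fin n)) (hσ : ∀ a, A a (σ a)) : condB A B Co K := by
  refine ⟨Set.range stX, σ.sumCongr (Equiv.refl _), Equiv.bijOn _ ?_, Set.mem_range_self, ?_⟩
  · rintro (a | w) <;> simp [stX]
  · rintro _ ⟨a, rfl⟩
    exact hσ a

theorem exists_mem_input_output_of_condA (hn : 1 ≤ n) (hK : condA A B Co K) :
    ∃ i j, (i, j) ∈ K ∧ (∃ s, B i s) ∧ ∃ s, Co s j := by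
  obtain ⟨⟨i, j⟩, hij, ⟨-, input_to_state⟩, ⟨state_to_output, -⟩⟩ := hK ⟨0, hn⟩
  exact ⟨i, j, hij, exists_input_of_reflTransGen input_to_state,
    exists_output_of_reflTransGen state_to_output⟩

end ClosedLoop

section Cost

variable {m p : ℕ} (P : Fin m → Fin p → NNReal)

theorem fcost_singleton (i : Fin m) (j : Fin p) : fcost P {(i, j)} = P i j :=
  Finset.sum_singleton _ _

theorem le_fcost_of_mem {K : Finset (Fin m × Fin p)} {i : Fin m} {j : Fin p} (hij : (i, j) ∈ K) :
    P i j ≤ fcost P K :=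
  Finset.single_le_sum_of_canonicallyOrdered (f := fun e : Fin m × Fin p => P e.1 e.2) hij

end Cost

/-- if the state digraph is strongly connected (irreducible),
`n ≥ 1`, and the state bipartite graph has a perfect matching (a permutation
`σ` of the states with a state edge `x → σ x` for every `x`), then (1) any
singleton feedback set `{(i, j)}` with `u_i` actuating some state and `y_j`
sensing some state satisfies conditions (a) and (b), and (2) the optimal
feedback-selection cost equals the minimum entry `P i j` over such pairs. -/
theorem irreducible_singleton_optimal {n m p : ℕ} (hn : 1 ≤ n)
    (A : Fin n → Fin n → Prop) (B : Fin m → Fin n → Prop) (Co : Fin n → Fin p → Prop)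
    (hirr : ∀ a c : Fin n, Relation.ReflTransGen A a c)
    (σ : Equiv.Perm (Fin n)) (hσ : ∀ a : Fin n, A a (σ a))
    (P : Fin m → Fin p → NNReal)
    (hpair : ∃ i : Fin m, ∃ j : Fin p, (∃ s : Fin n, B i s) ∧ (∃ s : Fin n, Co s j)) :
    (∀ i : Fin m, ∀ j : Fin p, (∃ s : Fin n, B i s) → (∃ s : Fin n, Co s j) →
      condA A B Co {(i, j)} ∧ condB A B Co {(i, j)}) ∧
    sInf {c : NNReal | ∃ K : Finset (Fin m × Fin p),
        condA A B Co K ∧ condB A B Co K ∧ c = fcost P K}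
      = sInf {c : NNReal | ∃ i : Fin m, ∃ j : Fin p,
          (∃ s : Fin n, B i s) ∧ (∃ s : Fin n, Co s j) ∧ c = P i j} := by
  have singleton_feasible (i : Fin m) (j : Fin p) (hi : ∃ s, B i s) (hj : ∃ s, Co s j) :
      condA A B Co {(i, j)} ∧ condB A B Co {(i, j)} :=
    ⟨condA_of_mem hirr (Finset.mem_singleton_self _) hi hj, condB_of_perm σ hσ⟩
  refine ⟨singleton_feasible, csInf_eq_csInf_of_forall_exists_le ?_ ?_⟩
  · rintro _ ⟨K, hA, -, rfl⟩
    obtain ⟨i, j, hij, hi, hj⟩ := exists_mem_input_output_of_condA hn hA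
    exact ⟨P i j, ⟨i, j, hi, hj, rfl⟩, le_fcost_of_mem P hij⟩
  · rintro _ ⟨i, j, hi, hj, rfl⟩
    obtain ⟨hA, hB⟩ := singleton_feasible i j hi hj
    exact ⟨P i j, ⟨{(i, j)}, hA, hB, (fcost_singleton P i j).symm⟩, le_rfl⟩
end
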